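/- Let 𝐅 = (F_1,…,F_d) ∈ F_d^0 and let C ∈ C^OS(𝐅) be absolutely continuous. Then the density of C vanishes almost everywhere on [0,1]^d ∖ T^𝐅, where T^𝐅 = {u = (u_1,…,u_d) ∈ [0,1]^d : F_1^{-1}(u_1) ≤ ⋯ ≤ F_d^{-1}(u_d)}. -/

import Mathlib

/-! A copula `C ∈ C^OS(F)` is the law of `(F_1(X_1), …, F_d(X_d))` with `X` almost surely
nondecreasing, and the density of `C` vanishes a.e. on every `C`-null set, so it suffices that
`C` charges only `T^F`.  Since `C` is absolutely continuous and carried by `[0,1]^d`, almost every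
`u` lies in `(0,1)^d`.  If such a `u` violates `F_i^{-1}(u_i) ≤ F_j^{-1}(u_j)` for some `i ≤ j`,
a rational `a` strictly between the two quantiles gives `F_i(a) < u_i` and `u_j ≤ F_j(a)`.  For
`u = (F_k(X_k))_k` this forces `a < X_i ≤ X_j` and `F_j(X_j) = F_j(a)`, so `X_j` lies on a flat
piece of its own cdf, to the right of `a`; this has probability zero (`measure_flat_right`).
Comparing with rational levels keeps all the sets involved measurable, without any measurability
statement about the quantile functions. -/

/- Formalization framework for "Maximum entropy distribution of order statistics with given
marginals" (Butucea, Delmas, Dutfoy, Fischer).  One-dimensional cdfs are identified with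
(probability) measures on `ℝ`, and cdfs on `ℝ^d` with measures on `Fin d → ℝ`. -/

open MeasureTheory Set
open scoped ENNReal

noncomputable section

namespace MaxEntOS

variable {d : ℕ}

/-- The cumulative distribution function of a measure on `ℝ`. -/
def cdf1 (ν : Measure ℝ) (t : ℝ) : ℝ := (ν (Iic t)).toReal

/-- The cdf extended to `EReal` arguments (so that `cdfE ν ⊥ = 0` and `cdfE ν ⊤ = ν ℝ`). -/
def cdfE (ν : Measure ℝ) (x : EReal) : ℝ := (ν {s : ℝ | (s : EReal) ≤ x}).toReal

/-- The generalized inverse (quantile function) of the cdf of `ν`, real-valued. -/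
def qReal (ν : Measure ℝ) (t : ℝ) : ℝ := sInf {s : ℝ | t ≤ cdf1 ν s}

/-- The generalized inverse of a nondecreasing function `g : ℝ → ℝ`, `EReal`-valued, with the
conventions `inf ∅ = ⊤` and `inf ℝ = ⊥`. -/
def qInvE (g : ℝ → ℝ) (t : ℝ) : EReal := sInf ((fun s : ℝ => (s : EReal)) '' {s : ℝ | t ≤ g s})

open scoped Classical in
/-- The differential entropy (with respect to Lebesgue measure) of a measure, with values in
`EReal` : it equals `⊥` if the measure is not absolutely continuous, and otherwise it is
`−∫ f log f`, computed as the difference of the lower integrals of the negative and positive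
parts of `f log f`, where `f` is the density. -/
def dEntropy {α : Type*} [MeasureSpace α] (μ : Measure α) : EReal :=
  if μ ≪ (volume : Measure α) then
    ((∫⁻ x, ENNReal.ofReal
        (-((μ.rnDeriv volume x).toReal * Real.log ((μ.rnDeriv volume x).toReal))) : ℝ≥0∞) : EReal)
      - ((∫⁻ x, ENNReal.ofReal
        ((μ.rnDeriv volume x).toReal * Real.log ((μ.rnDeriv volume x).toReal)) : ℝ≥0∞) : EReal)
  else ⊥

/-- The nondecreasing rearrangement (order statistics) of a tuple. -/
def orderStat (x : Fin d → ℝ) : Fin d → ℝ := fun i => x (Tuple.sort x i)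

/-- The `i`-th one-dimensional marginal of a measure on `ℝ^d`. -/
def marg (μ : Measure (Fin d → ℝ)) (i : Fin d) : Measure ℝ := μ.map fun x => x i

/-- The multidiagonal of a measure on `ℝ^d` : the tuple of one-dimensional marginals of the
order statistics. -/
def multidiag (μ : Measure (Fin d → ℝ)) (i : Fin d) : Measure ℝ := μ.map fun x => orderStat x i

/-- The uniform distribution on `[0,1]`. -/
def uniform01 : Measure ℝ := (volume : Measure ℝ).restrict (Icc 0 1)

/-- A copula : a probability measure on `ℝ^d` whose one-dimensional marginals are all uniform
on `[0,1]`. -/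
def IsCopula (μ : Measure (Fin d → ℝ)) : Prop :=
  IsProbabilityMeasure μ ∧ ∀ i, marg μ i = uniform01

/-- A measure on `ℝ^d` is symmetric (exchangeable) if it is invariant under permutations of the
coordinates. -/
def IsSymmetric (μ : Measure (Fin d → ℝ)) : Prop :=
  ∀ π : Equiv.Perm (Fin d), μ.map (fun x => fun i => x (π i)) = μ

/-- `δ` belongs to `D` : it is the multidiagonal of some copula. -/
def IsMultidiag (δ : Fin d → Measure ℝ) : Prop :=
  ∃ μ : Measure (Fin d → ℝ), IsCopula μ ∧ multidiag μ = δ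

/-- `δ` belongs to `D^0` : it is the multidiagonal of some absolutely continuous copula. -/
def IsMultidiag0 (δ : Fin d → Measure ℝ) : Prop :=
  ∃ μ : Measure (Fin d → ℝ), IsCopula μ ∧ μ ≪ (volume : Measure (Fin d → ℝ)) ∧ multidiag μ = δ

/-- `F ∈ F_d` : `F` is a `d`-tuple of continuous one-dimensional cdfs (identified with atomless
probability measures on `ℝ`) which are stochastically ordered : `F (i-1) ≥ F i` pointwise. -/
structure IsMargOS [NeZero d] (F : Fin d → Measure ℝ) : Prop where
  prob : ∀ i, IsProbabilityMeasure (F i)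
  cont : ∀ i, ∀ t : ℝ, F i {t} = 0
  ord : ∀ i : Fin d, i ≠ 0 → ∀ t : ℝ, cdf1 (F i) t ≤ cdf1 (F (i - 1)) t

/-- `μ ∈ L^OS_d(F)` : `μ` is the distribution of a `d`-dimensional order statistic (an almost
surely nondecreasing random vector) with one-dimensional marginals `F`. -/
def IsCdfOS (F : Fin d → Measure ℝ) (μ : Measure (Fin d → ℝ)) : Prop :=
  IsProbabilityMeasure μ ∧ μ {x | Monotone x} = 1 ∧ ∀ i, marg μ i = F i

/-- `F ∈ F_d^0` : there exists an absolutely continuous distribution of order statistics with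
one-dimensional marginals `F`. -/
def IsMargOS0 [NeZero d] (F : Fin d → Measure ℝ) : Prop :=
  IsMargOS F ∧ ∃ μ : Measure (Fin d → ℝ), IsCdfOS F μ ∧ μ ≪ (volume : Measure (Fin d → ℝ))

/-- The functional `J(F) = ∑_{i=2}^d ∫ |log (F_{i-1}(t) − F_i(t))| dF_i(t) ∈ [0,∞]`. -/
def Jfun [NeZero d] (F : Fin d → Measure ℝ) : ℝ≥0∞ :=
  ∑ i : Fin d, if i = 0 then 0 else
    ∫⁻ t, ENNReal.ofReal |Real.log (cdf1 (F (i - 1)) t - cdf1 (F i) t)| ∂(F i)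

/-- The copula of a measure on `ℝ^d` (for continuous marginals this is the unique copula
provided by Sklar's theorem) : the law of `(F_1(X_1), …, F_d(X_d))`. -/
def copulaOf (μ : Measure (Fin d → ℝ)) : Measure (Fin d → ℝ) :=
  μ.map fun x => fun i => cdf1 (marg μ i) (x i)

/-- The set `C^{OS}(F)` of copulas of distributions of order statistics with marginal
cdfs `F`. -/
def copulaOS (F : Fin d → Measure ℝ) : Set (Measure (Fin d → ℝ)) :=
  {C | ∃ μ, IsCdfOS F μ ∧ copulaOf μ = C}

/-- The joint distribution with one-dimensional marginals `F` and copula `C` : the law of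
`(F_1^{-1}(U_1), …, F_d^{-1}(U_d))` where `U ∼ C`. -/
def joinCopula (F : Fin d → Measure ℝ) (C : Measure (Fin d → ℝ)) : Measure (Fin d → ℝ) :=
  C.map fun u => fun i => qReal (F i) (u i)

/-- The law of `X_Π`, where `X ∼ μ` and `Π` is an independent uniform random permutation of
`{1, …, d}`. -/
def symmetrize (μ : Measure (Fin d → ℝ)) : Measure (Fin d → ℝ) :=
  (d.factorial : ℝ≥0∞)⁻¹ • ∑ π : Equiv.Perm (Fin d), μ.map (fun x => fun i => x (π i))

/-- The symmetrizing operator `S_F` on copulas : `S_F(C)` is the copula of `X_Π` where `X` has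
one-dimensional marginals `F` and copula `C`, and `Π` is an independent uniform random
permutation. -/
def SF (F : Fin d → Measure ℝ) (C : Measure (Fin d → ℝ)) : Measure (Fin d → ℝ) :=
  copulaOf (symmetrize (joinCopula F C))

/-- The average cdf `G = (1/d) ∑_{i=1}^d F_i`. -/
def Gbar (F : Fin d → Measure ℝ) (t : ℝ) : ℝ := (∑ i, cdf1 (F i) t) / d

/-- `G` extended to `EReal` arguments (`GbarE F ⊥ = 0` and `GbarE F ⊤ = 1` for probability
measures). -/
def GbarE (F : Fin d → Measure ℝ) (x : EReal) : ℝ := (∑ i, cdfE (F i) x) / d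

/-- The multidiagonal `δ^F` associated to the marginals `F`, as a tuple of measures : the law
of `G(X_i)` where `X_i ∼ F_i`, whose cdf is `F_i ∘ G^{-1}`. -/
def mdiagF (F : Fin d → Measure ℝ) (i : Fin d) : Measure ℝ := (F i).map (Gbar F)

/-- `C` is a copula of the measure `ν` on `ℝ^d` : `C` is a copula and `ν` is the joint
distribution with the marginals of `ν` and copula `C`. -/
def IsCopulaOf (C ν : Measure (Fin d → ℝ)) : Prop :=
  IsCopula C ∧ ν = joinCopula (marg ν) C

/-- The extended tuple of multidiagonal cdfs, with the conventions `δ_(0) = 1` and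
`δ_(d+1) = 0`; the natural index `i ∈ {1, …, d}` corresponds to `δ_(i)`. -/
def dcdf (δ : Fin d → Measure ℝ) (i : ℕ) (t : ℝ) : ℝ :=
  if h0 : i = 0 then 1
  else if h : i ≤ d then cdf1 (δ ⟨i - 1, by omega⟩) t
  else 0

/-- The open set `Ψ^δ_i = {t ∈ (0,1) : δ_(i-1)(t) > δ_(i)(t)}`, for `1 ≤ i ≤ d+1`
(with the conventions `δ_(0) = 1` and `δ_(d+1) = 0`). -/
def Psi (δ : Fin d → Measure ℝ) (i : ℕ) : Set ℝ :=
  Ioo 0 1 ∩ {t | dcdf δ i t < dcdf δ (i - 1) t}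

/-- Left endpoint of the connected component of `U` containing `t`. -/
def lend (U : Set ℝ) (t : ℝ) : ℝ := sSup {s | s ≤ t ∧ s ∉ U}

/-- Right endpoint of the connected component of `U` containing `t`. -/
def rend (U : Set ℝ) (t : ℝ) : ℝ := sInf {s | t ≤ s ∧ s ∉ U}

/-- Midpoint `m_i^{(j)}` of the connected component of `U` containing `t`. -/
def midpt (U : Set ℝ) (t : ℝ) : ℝ := (lend U t + rend U t) / 2

/-- The integrand `δ'_(i)(s) / (δ_(i-1)(s) − δ_(i)(s))` (that is, `K'_i`). -/
def kInt (δ : Fin d → Measure ℝ) (i : ℕ) (s : ℝ) : ℝ :=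
  deriv (dcdf δ i) s / (dcdf δ (i - 1) s - dcdf δ i s)

/-- `K_i(t)`, integrating `K'_i` from the midpoint of the connected component of `Ψ^δ_i`
containing `t` (note `K_{d+1} = 0` holds automatically, `δ_(d+1)` being constant). -/
def Kfun (δ : Fin d → Measure ℝ) (i : ℕ) (t : ℝ) : ℝ :=
  ∫ s in (midpt (Psi δ i) t)..t, kInt δ i s

/-- The function `a_i(t) = K'_i(t) e^{K_{i+1}(t) − K_i(t)} 1_{Ψ^δ_i ∩ Ψ^δ_{i+1}}(t)`. -/
def aFun (δ : Fin d → Measure ℝ) (i : ℕ) : ℝ → ℝ :=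
  (Psi δ i ∩ Psi δ (i + 1)).indicator fun t =>
    kInt δ i t * Real.exp (Kfun δ (i + 1) t - Kfun δ i t)

/-- The set `L_δ` of `u ∈ [0,1]^d` such that `(u_(i-1), u_(i)) ⊆ Ψ^δ_i` for all `2 ≤ i ≤ d`. -/
def Lset [NeZero d] (δ : Fin d → Measure ℝ) : Set (Fin d → ℝ) :=
  {u | (∀ j, u j ∈ Icc (0 : ℝ) 1) ∧
    ∀ i : Fin d, i ≠ 0 → Ioo (orderStat u (i - 1)) (orderStat u i) ⊆ Psi δ (i.val + 1)}

/-- The density `c_δ(u) = (1/d!) 1_{L_δ}(u) ∏_{i=1}^d a_i(u_(i))` of the maximum entropy copula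
with multidiagonal `δ`. -/
def cDelta [NeZero d] (δ : Fin d → Measure ℝ) : (Fin d → ℝ) → ℝ :=
  (Lset δ).indicator fun u =>
    (d.factorial : ℝ)⁻¹ * ∏ i : Fin d, aFun δ (i.val + 1) (orderStat u i)

/-- The maximum entropy copula `C_δ` with multidiagonal `δ` : the measure with density `c_δ`. -/
def CDelta [NeZero d] (δ : Fin d → Measure ℝ) : Measure (Fin d → ℝ) :=
  (volume : Measure (Fin d → ℝ)).withDensity fun u => ENNReal.ofReal (cDelta δ u)

/-- The density of a one-dimensional measure `ν` with respect to Lebesgue measure. -/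
def densOf (ν : Measure ℝ) (t : ℝ) : ℝ := (ν.rnDeriv volume t).toReal

/-- The function `ℓ_i(t) = f_i(t) / (F_{i-1}(t) − F_i(t))`. -/
def ellF [NeZero d] (F : Fin d → Measure ℝ) (i : Fin d) (t : ℝ) : ℝ :=
  densOf (F i) t / (cdf1 (F (i - 1)) t - cdf1 (F i) t)

/-- The set `L^F` of ordered vectors `x ∈ ℝ^d` such that `F_{i-1}(t) > F_i(t)` for all
`t ∈ (x_{i-1}, x_i)` and all `2 ≤ i ≤ d`. -/
def LsetF [NeZero d] (F : Fin d → Measure ℝ) : Set (Fin d → ℝ) :=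
  {x | Monotone x ∧ ∀ i : Fin d, i ≠ 0 →
    ∀ t ∈ Ioo (x (i - 1)) (x i), cdf1 (F i) t < cdf1 (F (i - 1)) t}

/-- The density `f_F` of the maximum entropy distribution of order statistics with marginal
cdfs `F` :
`f_F(x) = f_1(x_1) ∏_{i=2}^d ℓ_i(x_i) exp(−∫_{x_{i-1}}^{x_i} ℓ_i(s) ds) 1_{L^F}(x)`. -/
def fF [NeZero d] (F : Fin d → Measure ℝ) : (Fin d → ℝ) → ℝ :=
  (LsetF F).indicator fun x =>
    densOf (F 0) (x 0) *
      ∏ i ∈ Finset.univ.erase (0 : Fin d),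
        ellF F i (x i) * Real.exp (-∫ s in (x (i - 1))..(x i), ellF F i s)


lemma cdf1_eq_cdf (ν : Measure ℝ) [IsProbabilityMeasure ν] (t : ℝ) :
    cdf1 ν t = ProbabilityTheory.cdf ν t := by
  rw [ProbabilityTheory.cdf_eq_real]; rfl

lemma cdf1_mono (ν : Measure ℝ) [IsProbabilityMeasure ν] : Monotone (cdf1 ν) := by
  intro s t hst
  rw [cdf1_eq_cdf, cdf1_eq_cdf]
  exact ProbabilityTheory.monotone_cdf ν hst

lemma cdf1_mem_Icc (ν : Measure ℝ) [IsProbabilityMeasure ν] (t : ℝ) :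
    cdf1 ν t ∈ Icc (0 : ℝ) 1 := by
  rw [cdf1_eq_cdf]
  exact ⟨ProbabilityTheory.cdf_nonneg ν t, ProbabilityTheory.cdf_le_one ν t⟩

/-- A probability measure does not charge the part, to the right of `a`, of a flat piece of its
cdf starting at `a`. -/
lemma measure_flat_right (ν : Measure ℝ) [IsProbabilityMeasure ν] (a : ℝ) :
    ν {x | a < x ∧ cdf1 ν x ≤ cdf1 ν a} = 0 := by
  have key : ∀ y, a < y → cdf1 ν y ≤ cdf1 ν a → ν (Ioc a y) = 0 := by
    intro y hay hy
    have hle : ν (Iic y) ≤ ν (Iic a) :=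
      (ENNReal.toReal_le_toReal (measure_ne_top _ _) (measure_ne_top _ _)).1 hy
    rw [← Iic_sdiff_Iic, measure_sdiff (Iic_subset_Iic.2 hay.le)
      measurableSet_Iic.nullMeasurableSet (measure_ne_top _ _)]
    exact tsub_eq_zero_of_le hle
  refine measure_null_of_locally_null _ fun x hx => ?_
  -- Every point of the flat piece has a relative neighbourhood inside some null `Ioc a y`:
  -- take `y` beyond `x` in the piece if there is one, and `y = x` if `x` is its maximum.
  by_cases hmax : ∃ y, x < y ∧ cdf1 ν y ≤ cdf1 ν a
  · obtain ⟨y, hxy, hy⟩ := hmax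
    exact ⟨Ioc a y, mem_nhdsWithin_of_mem_nhds (Ioc_mem_nhds hx.1 hxy),
      key y (hx.1.trans hxy) hy⟩
  · push Not at hmax
    refine ⟨Ioc a x, ?_, key x hx.1 hx.2⟩
    filter_upwards [self_mem_nhdsWithin] with z hz
    exact ⟨hz.1, not_lt.1 fun h => (hmax z h).not_ge hz.2⟩

/-- The hypothesis `t < 1` makes the set defining the quantile nonempty. -/
lemma le_cdf1_of_qReal_lt (ν : Measure ℝ) [IsProbabilityMeasure ν] {t a : ℝ} (ht : t < 1)
    (h : qReal ν t < a) : t ≤ cdf1 ν a := by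
  have hne : {s : ℝ | t ≤ cdf1 ν s}.Nonempty := by
    obtain ⟨s, hs⟩ := ((ProbabilityTheory.tendsto_cdf_atTop ν).eventually_const_lt ht).exists
    exact ⟨s, by rw [mem_ofPred_eq, cdf1_eq_cdf]; exact hs.le⟩
  obtain ⟨s, hs, hsa⟩ := exists_lt_of_csInf_lt hne h
  exact le_trans hs (cdf1_mono ν hsa.le)

/-- The hypothesis `0 < t` makes the set defining the quantile bounded below. -/
lemma cdf1_lt_of_lt_qReal (ν : Measure ℝ) [IsProbabilityMeasure ν] {t a : ℝ} (ht : 0 < t)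
    (h : a < qReal ν t) : cdf1 ν a < t := by
  have hbdd : BddBelow {s : ℝ | t ≤ cdf1 ν s} := by
    obtain ⟨b, hb⟩ := ((ProbabilityTheory.tendsto_cdf_atBot ν).eventually_lt_const ht).exists
    refine ⟨b, fun s hs => not_lt.1 fun hsb => ?_⟩
    rw [← cdf1_eq_cdf] at hb
    exact absurd (le_trans hs (cdf1_mono ν hsb.le)) (not_le.2 hb)
  by_contra hcon
  exact absurd (csInf_le hbdd (not_lt.1 hcon : a ∈ {s : ℝ | t ≤ cdf1 ν s})) (not_le.2 h)

lemma ae_ne_of_ac {C : Measure (Fin d → ℝ)} (hac : C ≪ (volume : Measure (Fin d → ℝ)))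
    (i : Fin d) (c : ℝ) : ∀ᵐ u ∂C, u i ≠ c := by
  refine hac.ae_le ?_
  exact Measure.ae_eval_ne (fun _ : Fin d => (volume : Measure ℝ)) i c

/-- A copula of order statistics does not charge the vectors whose `i`-th and `j`-th quantiles are
strictly separated by the level `a` in the wrong order. -/
lemma ae_not_separated {F : Fin d → Measure ℝ} [∀ i, IsProbabilityMeasure (F i)]
    {μ : Measure (Fin d → ℝ)} (hμ : IsCdfOS F μ) {i j : Fin d} (hij : i ≤ j) (a : ℝ) :
    ∀ᵐ u ∂(μ.map fun x k => cdf1 (F k) (x k)), ¬ (cdf1 (F i) a < u i ∧ u j ≤ cdf1 (F j) a) := by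
  obtain ⟨hprob, hmono, hmarg⟩ := hμ
  have hmeas : Measurable fun (x : Fin d → ℝ) k => cdf1 (F k) (x k) :=
    measurable_pi_lambda _ fun k => (cdf1_mono (F k)).measurable.comp (measurable_pi_apply k)
  have hset : MeasurableSet {u : Fin d → ℝ | ¬ (cdf1 (F i) a < u i ∧ u j ≤ cdf1 (F j) a)} :=
    ((measurableSet_lt measurable_const (measurable_pi_apply i)).inter
      (measurableSet_le (measurable_pi_apply j) measurable_const)).compl
  rw [ae_map_iff hmeas.aemeasurable hset]
  have hM : ∀ᵐ x ∂μ, Monotone x := by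
    have hcl : MeasurableSet {x : Fin d → ℝ | Monotone x} := isClosed_monotone.measurableSet
    exact (prob_compl_eq_zero_iff hcl).2 hmono
  have hflat : ∀ᵐ x ∂μ, ¬ (a < x j ∧ cdf1 (F j) (x j) ≤ cdf1 (F j) a) := by
    have h0 : ∀ᵐ y ∂(marg μ j), ¬ (a < y ∧ cdf1 (F j) y ≤ cdf1 (F j) a) := by
      rw [hmarg j, ae_iff]
      simpa only [not_not] using measure_flat_right (F j) a
    exact ae_of_ae_map (measurable_pi_apply j).aemeasurable h0
  filter_upwards [hM, hflat] with x hx hxf hsep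
  exact hxf ⟨((cdf1_mono (F i)).reflect_lt hsep.1).trans_le (hx hij), hsep.2⟩

/-- Lemma `lem:c_support`.  Let `F = (F_1, …, F_d) ∈ F_d^0` and let
`C ∈ C^OS(F)` be absolutely continuous.  Then the density of `C` vanishes almost everywhere
outside `T^F = {u ∈ [0,1]^d : F_1^{-1}(u_1) ≤ ⋯ ≤ F_d^{-1}(u_d)}`. -/
theorem stmt_14 {d : ℕ} [NeZero d] (F : Fin d → Measure ℝ) (hF : IsMargOS0 F)
    (C : Measure (Fin d → ℝ)) (hC : C ∈ copulaOS F)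
    (hac : C ≪ (volume : Measure (Fin d → ℝ))) :
    ∀ᵐ u ∂(volume : Measure (Fin d → ℝ)),
      u ∉ {u : Fin d → ℝ | (∀ j, u j ∈ Icc (0 : ℝ) 1) ∧
        Monotone fun i => qReal (F i) (u i)} →
      C.rnDeriv volume u = 0 := by
  obtain ⟨μ, hμ, rfl⟩ := hC
  have hFp : ∀ i, IsProbabilityMeasure (F i) := hF.1.prob
  have hmap : copulaOf μ = μ.map fun x k => cdf1 (F k) (x k) := by
    simp only [copulaOf, hμ.2.2]
  have hμp : IsProbabilityMeasure μ := hμ.1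
  have hmeas : Measurable fun (x : Fin d → ℝ) k => cdf1 (F k) (x k) :=
    measurable_pi_lambda _ fun k => (cdf1_mono (F k)).measurable.comp (measurable_pi_apply k)
  have hIcc : ∀ᵐ u ∂(copulaOf μ), ∀ i, u i ∈ Icc (0 : ℝ) 1 := by
    rw [ae_all_iff]
    intro i
    rw [hmap, ae_map_iff hmeas.aemeasurable (measurable_pi_apply i measurableSet_Icc)]
    exact .of_forall fun x => cdf1_mem_Icc (F i) (x i)
  have h0 : ∀ᵐ u ∂(copulaOf μ), ∀ i, u i ≠ 0 := ae_all_iff.2 fun i => ae_ne_of_ac hac i 0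
  have h1 : ∀ᵐ u ∂(copulaOf μ), ∀ i, u i ≠ 1 := ae_all_iff.2 fun i => ae_ne_of_ac hac i 1
  have hsep : ∀ᵐ u ∂(copulaOf μ), ∀ i j : Fin d, i ≤ j → ∀ a : ℚ,
      ¬ (cdf1 (F i) a < u i ∧ u j ≤ cdf1 (F j) a) := by
    rw [hmap]
    simp only [ae_all_iff]
    exact fun i j hij a => ae_not_separated hμ hij a
  have hT : ∀ᵐ u ∂(copulaOf μ), u ∈ {u : Fin d → ℝ | (∀ j, u j ∈ Icc (0 : ℝ) 1) ∧
      Monotone fun i => qReal (F i) (u i)} := by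
    filter_upwards [hIcc, h0, h1, hsep] with u hu hu0 hu1 hus
    refine ⟨hu, fun i j hij => not_lt.1 fun hlt => ?_⟩
    obtain ⟨a, hja, hai⟩ := exists_rat_btwn hlt
    exact hus i j hij a
      ⟨cdf1_lt_of_lt_qReal (F i) (lt_of_le_of_ne (hu i).1 (hu0 i).symm) hai,
        le_cdf1_of_qReal_lt (F j) (lt_of_le_of_ne (hu j).2 (hu1 j)) hja⟩
  have hCp : IsFiniteMeasure (copulaOf μ) := by rw [hmap]; infer_instance
  rw [← Measure.withDensity_rnDeriv_eq _ _ hac,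
    ae_withDensity_iff (Measure.measurable_rnDeriv _ _)] at hT
  filter_upwards [hT] with u hu hnot
  by_contra hne
  exact hnot (hu hne)

end MaxEntOS
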